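/- arXiv:1405.1938 — 2 statements merged into one kernel-verified Lean document; each statement's English description precedes it below -/
import Mathlib

section
/- Let n > 1 and let ρ ∈ ℂ be a primitive n-th root of unity, and let A = ℂ_ρ[x,y,z] be the quotient of the free ℂ-algebra on x, y, z by the two-sided ideal generated by xy − ρyx, yz − ρzy, zx − ρxz. Then the center Z(A) is isomorphic as a ℂ-algebra to ℂ[u,v,w,g]/(uvw − g^n). -/
/-- The generators of the free algebra on three variables. -/
noncomputable def freeGen (i : Fin 3) : FreeAlgebra ℂ (Fin 3) := FreeAlgebra.ι ℂ i

/-- The defining relations of the quantum affine 3-space `ℂ_ρ[x,y,z]`: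
`xy = ρ yx`, `yz = ρ zy`, `zx = ρ xz`. -/
inductive QuantumRel (ρ : ℂ) : FreeAlgebra ℂ (Fin 3) → FreeAlgebra ℂ (Fin 3) → Prop
  | xy : QuantumRel ρ (freeGen 0 * freeGen 1) (ρ • (freeGen 1 * freeGen 0))
  | yz : QuantumRel ρ (freeGen 1 * freeGen 2) (ρ • (freeGen 2 * freeGen 1))
  | zx : QuantumRel ρ (freeGen 2 * freeGen 0) (ρ • (freeGen 0 * freeGen 2))

/-- The quantum affine 3-space `ℂ_ρ[x,y,z]`. -/
noncomputable abbrev QuantumAlg (ρ : ℂ) := RingQuot (QuantumRel ρ)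

/-- The image of `x` in `ℂ_ρ[x,y,z]`. -/
noncomputable def qX (ρ : ℂ) : QuantumAlg ρ := RingQuot.mkAlgHom ℂ (QuantumRel ρ) (freeGen 0)

/-- The image of `y` in `ℂ_ρ[x,y,z]`. -/
noncomputable def qY (ρ : ℂ) : QuantumAlg ρ := RingQuot.mkAlgHom ℂ (QuantumRel ρ) (freeGen 1)

/-- The image of `z` in `ℂ_ρ[x,y,z]`. -/
noncomputable def qZ (ρ : ℂ) : QuantumAlg ρ := RingQuot.mkAlgHom ℂ (QuantumRel ρ) (freeGen 2)

/-! In the basis of ordered monomials `x ^ p 0 * y ^ p 1 * z ^ p 2`, multiplication is addition in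
`ℕ³` twisted by powers of `ρ`. So the center is spanned by the monomials that commute with all
others, and these are the ones whose three exponents agree modulo `n`, i.e. whose exponent is
`n • d + (r, r, r)` with `r < n`. Up to units they are the products
`u ^ d 0 * v ^ d 1 * w ^ d 2 * g ^ r` of `u = xⁿ`, `v = yⁿ`, `w = zⁿ`, `g = xyz`, which satisfy
`uvw = gⁿ` once `u` is rescaled. This relation reduces every monomial in `u, v, w, g` to one with
`r < n`, and those are linearly independent in the center, so it generates all relations. -/

section TwistedBasis

variable {R A M : Type*} [CommRing R] [Ring A] [Algebra R A]
  {κ : M → M → R} {b : Module.Basis M R A}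

lemma repr_basis_mul [Add M] [IsLeftCancelAdd M]
    (hb : ∀ p q, b p * b q = κ p q • b (p + q)) (d p : M) (a : A) :
    b.repr (b d * a) (d + p) = κ d p * b.repr a p := by
  suffices h : Finsupp.lapply (d + p) ∘ₗ b.repr.toLinearMap ∘ₗ LinearMap.mulLeft R (b d) =
      κ d p • Finsupp.lapply p ∘ₗ b.repr.toLinearMap from LinearMap.congr_fun h a
  refine b.ext fun q ↦ ?_
  obtain rfl | hq := eq_or_ne q p <;> simp [*]

lemma repr_mul_basis [Add M] [IsRightCancelAdd M]
    (hb : ∀ p q, b p * b q = κ p q • b (p + q)) (p d : M) (a : A) :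
    b.repr (a * b d) (p + d) = κ p d * b.repr a p := by
  suffices h : Finsupp.lapply (p + d) ∘ₗ b.repr.toLinearMap ∘ₗ LinearMap.mulRight R (b d) =
      κ p d • Finsupp.lapply p ∘ₗ b.repr.toLinearMap from LinearMap.congr_fun h a
  refine b.ext fun q ↦ ?_
  obtain rfl | hq := eq_or_ne q p <;> simp [*]

theorem center_eq_span_of_twisted_basis [IsDomain R] [AddCommMagma M] [IsCancelAdd M]
    (hb : ∀ p q, b p * b q = κ p q • b (p + q)) :
    Subalgebra.toSubmodule (Subalgebra.center R A) =
      Submodule.span R (b '' {p | ∀ q, κ p q = κ q p}) := by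
  refine le_antisymm (fun a ha ↦ ?_) (Submodule.span_le.2 ?_)
  · refine b.mem_span_image.2 fun p hp ↦ ?_
    intro d
    have h_comm : b d * a = a * b d := (Subalgebra.mem_center_iff (R := R)).1 ha (b d)
    have h_coeff := congrArg (b.repr · (d + p)) h_comm
    rw [repr_basis_mul hb, add_comm, repr_mul_basis hb] at h_coeff
    exact (mul_right_cancel₀ (Finsupp.mem_support_iff.1 hp) h_coeff).symm
  · rintro _ ⟨p, hp, rfl⟩
    refine (Subalgebra.mem_center_iff (R := R)).2 fun a ↦ ?_
    suffices h : LinearMap.mulRight R (b p) = LinearMap.mulLeft R (b p) from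
      LinearMap.congr_fun h a
    refine b.ext fun q ↦ ?_
    simp only [LinearMap.mulRight_apply, LinearMap.mulLeft_apply, hb, add_comm q p, hp q]

end TwistedBasis

section Hypersurface

open MvPolynomial

variable {n : ℕ}

/-- The monomials `u ^ d 0 * v ^ d 1 * w ^ d 2 * g ^ r` with `r < n` in a quadruple
`f = (u, v, w, g)`: the normal forms of monomials modulo the relation `uvw = gⁿ`. -/
def normalMonomial {C : Type*} [Monoid C] (n : ℕ) (f : Fin 4 → C) (t : (Fin 3 → ℕ) × Fin n) : C :=
  f 0 ^ t.1 0 * f 1 ^ t.1 1 * f 2 ^ t.1 2 * f 3 ^ (t.2 : ℕ)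

lemma map_normalMonomial {C C' : Type*} [Monoid C] [Monoid C'] {H : Type*} [FunLike H C C']
    [MonoidHomClass H C C'] (φ : H) (f : Fin 4 → C) (t : (Fin 3 → ℕ) × Fin n) :
    φ (normalMonomial n f t) = normalMonomial n (φ ∘ f) t := by
  simp [normalMonomial]

lemma exists_normalMonomial_eq {C : Type*} [CommSemiring C] (hn : 0 < n) {f : Fin 4 → C}
    (hf : f 0 * f 1 * f 2 = f 3 ^ n) (k : Fin 4 → ℕ) :
    ∃ t, normalMonomial n f t = ∏ i, f i ^ k i := by
  let c := k 3 / n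
  have h_div : f 3 ^ k 3 = (f 0 * f 1 * f 2) ^ c * f 3 ^ (k 3 % n) := by
    rw [hf, ← pow_mul, ← pow_add, Nat.div_add_mod]
  refine ⟨(![k 0 + c, k 1 + c, k 2 + c], ⟨k 3 % n, Nat.mod_lt _ hn⟩), ?_⟩
  rw [Fin.prod_univ_four, h_div]
  simp only [normalMonomial, Matrix.cons_val]
  ring

lemma aeval_mem_span_normalMonomial {R C : Type*} [CommSemiring R] [CommSemiring C] [Algebra R C]
    (hn : 0 < n) {f : Fin 4 → C} (hf : f 0 * f 1 * f 2 = f 3 ^ n) (p : MvPolynomial (Fin 4) R) :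
    aeval f p ∈ Submodule.span R (Set.range (normalMonomial n f)) := by
  simp only [aeval_def, eval₂_eq', ← Algebra.smul_def]
  refine Submodule.sum_mem _ fun k _ ↦ Submodule.smul_mem _ _ (Submodule.subset_span ?_)
  exact exists_normalMonomial_eq hn hf k

theorem nonempty_algEquiv_of_normalMonomial_basis {R C : Type*} [CommRing R] [CommRing C]
    [Algebra R C] (hn : 0 < n) {f : Fin 4 → C} (hf : f 0 * f 1 * f 2 = f 3 ^ n)
    (h_li : LinearIndependent R (normalMonomial n f))
    (h_span : ⊤ ≤ Submodule.span R (Set.range (normalMonomial n f))) :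
    Nonempty ((MvPolynomial (Fin 4) R ⧸
      Ideal.span {(X 0 : MvPolynomial (Fin 4) R) * X 1 * X 2 - X 3 ^ n}) ≃ₐ[R] C) := by
  set I := Ideal.span {(X 0 : MvPolynomial (Fin 4) R) * X 1 * X 2 - X 3 ^ n}
  have h_ker : ∀ p ∈ I, aeval f p = 0 := by
    suffices I ≤ RingHom.ker (aeval f : _ →ₐ[R] C) from fun p hp ↦ this hp
    simp [I, Ideal.span_le, RingHom.mem_ker, hf]
  let F : (MvPolynomial (Fin 4) R ⧸ I) →ₐ[R] C := Ideal.Quotient.liftₐ I (aeval f) h_ker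
  let gen : Fin 4 → MvPolynomial (Fin 4) R ⧸ I := fun i ↦ Ideal.Quotient.mkₐ R I (X i)
  have h_gen : gen 0 * gen 1 * gen 2 = gen 3 ^ n := by
    simp only [gen, ← map_mul, ← map_pow]
    exact Ideal.Quotient.eq.2 (Ideal.subset_span rfl)
  have h_span' : ⊤ ≤ Submodule.span R (Set.range (normalMonomial n gen)) := by
    rintro q -
    obtain ⟨p, rfl⟩ := Ideal.Quotient.mkₐ_surjective R I q
    rw [aeval_unique (Ideal.Quotient.mkₐ R I)]
    exact aeval_mem_span_normalMonomial hn h_gen p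
  have hF_monomial : F ∘ normalMonomial n gen = normalMonomial n f := by
    have hF_gen : F ∘ gen = f := funext fun i ↦ aeval_X f i
    exact funext fun t ↦ by rw [Function.comp_apply, map_normalMonomial, hF_gen]
  have h_li' : LinearIndependent R (normalMonomial n gen) :=
    .of_comp F.toLinearMap (by simpa [hF_monomial] using h_li)
  let b := Module.Basis.mk h_li' h_span'
  let e := b.equiv (Module.Basis.mk h_li h_span) (Equiv.refl _)
  have he : e.toLinearMap = F.toLinearMap := b.ext fun t ↦ by
    rw [LinearEquiv.coe_coe, b.equiv_apply, Module.Basis.mk_apply, Module.Basis.mk_apply]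
    exact (congrFun hF_monomial t).symm
  have hF : ⇑e = F := congrArg DFunLike.coe he
  exact ⟨.ofBijective F (hF ▸ e.bijective)⟩

end Hypersurface

lemma pow_mul_pow_of_mul_eq_smul {G A : Type*} [Monoid G] [Monoid A] [MulAction G A]
    [IsScalarTower G A A] [SMulCommClass G A A] {c : G} {a b : A} (h : a * b = c • (b * a))
    (k l : ℕ) :
    a ^ k * b ^ l = c ^ (k * l) • (b ^ l * a ^ k) := by
  have h_right (l : ℕ) : a * b ^ l = c ^ l • (b ^ l * a) := by
    induction l with
    | zero => simp
    | succ l ih =>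
      rw [pow_succ, ← mul_assoc, ih, smul_mul_assoc, mul_assoc, h, mul_smul_comm, smul_smul,
        ← pow_succ, mul_assoc]
  induction k with
  | zero => simp
  | succ k ih =>
    rw [pow_succ, mul_assoc, h_right, mul_smul_comm, ← mul_assoc, ih, smul_mul_assoc, smul_smul,
      ← pow_add, mul_assoc, add_mul, one_mul, add_comm]

section QuantumTriple

variable {R A : Type*} [CommRing R] [Ring A] [Algebra R A] {ρ : Rˣ} {s : Fin 3 → A} {n : ℕ}

/-- The relations `xy = ρ yx`, `yz = ρ zy`, `zx = ρ xz` between the entries of a triple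
`s = (x, y, z)`, with indices read cyclically. -/
def IsQuantumTriple (ρ : Rˣ) (s : Fin 3 → A) : Prop :=
  ∀ i, s i * s (i + 1) = ρ • (s (i + 1) * s i)

/-- The ordered monomial `x ^ p 0 * y ^ p 1 * z ^ p 2` in a triple `s = (x, y, z)`. -/
def orderedMonomial {A : Type*} [Monoid A] (s : Fin 3 → A) (p : Fin 3 → ℕ) : A :=
  s 0 ^ p 0 * s 1 ^ p 1 * s 2 ^ p 2

/-- The exponent of `ρ` that appears when the product of the ordered monomials with exponents `p`
and `q` is reordered. -/
def reorderExponent (p q : Fin 3 → ℕ) : ℤ :=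
  p 2 * q 0 - p 1 * q 0 - p 2 * q 1

lemma reorderExponent_add_left (p p' q : Fin 3 → ℕ) :
    reorderExponent (p + p') q = reorderExponent p q + reorderExponent p' q := by
  simp only [reorderExponent, Pi.add_apply, Nat.cast_add]
  ring

lemma reorderExponent_add_right (p q q' : Fin 3 → ℕ) :
    reorderExponent p (q + q') = reorderExponent p q + reorderExponent p q' := by
  simp only [reorderExponent, Pi.add_apply, Nat.cast_add]
  ring

lemma IsQuantumTriple.orderedMonomial_mul (hs : IsQuantumTriple ρ s) (p q : Fin 3 → ℕ) :
    orderedMonomial s p * orderedMonomial s q =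
      ρ ^ reorderExponent p q • orderedMonomial s (p + q) := by
  have h_zx : s 2 ^ p 2 * s 0 ^ q 0 = ρ ^ (p 2 * q 0) • (s 0 ^ q 0 * s 2 ^ p 2) :=
    pow_mul_pow_of_mul_eq_smul (hs 2) _ _
  have h_yx : s 1 ^ p 1 * s 0 ^ q 0 = ρ⁻¹ ^ (p 1 * q 0) • (s 0 ^ q 0 * s 1 ^ p 1) :=
    pow_mul_pow_of_mul_eq_smul (eq_inv_smul_iff.2 (hs 0).symm) _ _
  have h_zy : s 2 ^ p 2 * s 1 ^ q 1 = ρ⁻¹ ^ (p 2 * q 1) • (s 1 ^ q 1 * s 2 ^ p 2) :=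
    pow_mul_pow_of_mul_eq_smul (eq_inv_smul_iff.2 (hs 1).symm) _ _
  have h_exp : ρ ^ (p 2 * q 0) * ρ⁻¹ ^ (p 1 * q 0) * ρ⁻¹ ^ (p 2 * q 1) =
      ρ ^ reorderExponent p q := by
    simp only [reorderExponent, zpow_sub, ← inv_zpow, ← zpow_natCast, Nat.cast_mul]
  calc orderedMonomial s p * orderedMonomial s q
      = s 0 ^ p 0 * s 1 ^ p 1 * (s 2 ^ p 2 * s 0 ^ q 0) * s 1 ^ q 1 * s 2 ^ q 2 := by
        simp only [orderedMonomial, mul_assoc]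
    _ = ρ ^ (p 2 * q 0) • (s 0 ^ p 0 * (s 1 ^ p 1 * s 0 ^ q 0) * (s 2 ^ p 2 * s 1 ^ q 1) *
          s 2 ^ q 2) := by
        rw [h_zx]
        simp only [mul_assoc, mul_smul_comm, smul_mul_assoc]
    _ = (ρ ^ (p 2 * q 0) * ρ⁻¹ ^ (p 1 * q 0) * ρ⁻¹ ^ (p 2 * q 1)) •
          orderedMonomial s (p + q) := by
        rw [h_yx, h_zy]
        simp only [orderedMonomial, Pi.add_apply, pow_add, mul_assoc, mul_smul_comm,
          smul_mul_assoc, smul_smul, mul_comm (ρ⁻¹ ^ (p 2 * q 1))]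
    _ = ρ ^ reorderExponent p q • orderedMonomial s (p + q) := by rw [h_exp]

lemma IsQuantumTriple.orderedMonomial_one_pow (hs : IsQuantumTriple ρ s) (r : ℕ) :
    orderedMonomial s 1 ^ r = ρ ^ (-(r.choose 2 : ℤ)) • orderedMonomial s (r • 1) := by
  induction r with
  | zero => simp [orderedMonomial]
  | succ r ih =>
    have h_exp : reorderExponent (r • 1) 1 = -r := by simp [reorderExponent]
    rw [pow_succ, ih, smul_mul_assoc, hs.orderedMonomial_mul, h_exp, smul_smul, ← zpow_add,
      succ_nsmul, Nat.choose_succ_succ' r 1, Nat.choose_one_right, Nat.cast_add, neg_add_rev]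

lemma orderedMonomial_single {A : Type*} [Monoid A] (s : Fin 3 → A) (i : Fin 3) (k : ℕ) :
    orderedMonomial s (Pi.single i k) = s i ^ k := by
  fin_cases i <;> simp [orderedMonomial]

lemma IsQuantumTriple.top_le_span_orderedMonomial (hs : IsQuantumTriple ρ s)
    (h_gen : Algebra.adjoin R (Set.range s) = ⊤) :
    ⊤ ≤ Submodule.span R (Set.range (orderedMonomial s)) := by
  set S := Submodule.span R (Set.range (orderedMonomial s))
  have h_mem (p : Fin 3 → ℕ) : orderedMonomial s p ∈ S := Submodule.subset_span ⟨p, rfl⟩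
  have h_one : 1 ∈ S := by simpa [orderedMonomial] using h_mem 0
  have h_mul : S * S ≤ S := by
    rw [Submodule.span_mul_span, Submodule.span_le]
    rintro _ ⟨_, ⟨p, rfl⟩, _, ⟨q, rfl⟩, rfl⟩
    change orderedMonomial s p * orderedMonomial s q ∈ S
    exact hs.orderedMonomial_mul p q ▸ S.smul_mem _ (h_mem _)
  let B : Subalgebra R A :=
    S.toSubalgebra h_one fun a c ha hc ↦ h_mul (Submodule.mul_mem_mul ha hc)
  have h_le : Algebra.adjoin R (Set.range s) ≤ B := by
    refine Algebra.adjoin_le ?_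
    rintro _ ⟨i, rfl⟩
    exact (orderedMonomial_single s i 1).trans (pow_one _) ▸ h_mem (Pi.single i 1)
  exact fun a _ ↦ h_le (h_gen ▸ trivial)

/-- The operator by which the ordered monomial with exponent `d` acts on the free module on ordered
monomials by left multiplication. -/
noncomputable def twistedShift (ρ : Rˣ) (d : Fin 3 → ℕ) : Module.End R ((Fin 3 → ℕ) →₀ R) :=
  Finsupp.linearCombination R fun p ↦ Finsupp.single (d + p) ↑(ρ ^ reorderExponent d p)

lemma twistedShift_single (d p : Fin 3 → ℕ) (c : R) :
    twistedShift ρ d (Finsupp.single p c) =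
      ρ ^ reorderExponent d p • Finsupp.single (d + p) c := by
  simp [twistedShift, Units.smul_def, mul_comm]

lemma twistedShift_mul (d e : Fin 3 → ℕ) :
    twistedShift ρ d * twistedShift ρ e = ρ ^ reorderExponent d e • twistedShift ρ (d + e) := by
  refine Finsupp.lhom_ext fun p c ↦ ?_
  simp only [Module.End.mul_apply, LinearMap.smul_apply, twistedShift_single,
    LinearMap.map_smul_of_tower, smul_smul, ← zpow_add, reorderExponent_add_left,
    reorderExponent_add_right, add_assoc]
  congr 2
  ring

lemma twistedShift_single_pow (i : Fin 3) (k : ℕ) :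
    twistedShift ρ (Pi.single i 1) ^ k = twistedShift ρ (Pi.single i k) := by
  induction k with
  | zero =>
    refine Finsupp.lhom_ext fun p c ↦ ?_
    simp [twistedShift_single, reorderExponent]
  | succ k ih =>
    have h_exp : reorderExponent (Pi.single i k) (Pi.single i 1) = 0 := by
      fin_cases i <;> simp [reorderExponent]
    rw [pow_succ, ih, twistedShift_mul, h_exp, zpow_zero, one_smul, ← Pi.single_add]

lemma isQuantumTriple_twistedShift (ρ : Rˣ) :
    IsQuantumTriple ρ fun i ↦ twistedShift ρ (Pi.single i 1) := by
  intro i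
  simp only [twistedShift_mul, smul_smul, add_comm (Pi.single (i + 1) 1), ← zpow_one_add]
  congr 2
  fin_cases i <;> simp [reorderExponent]

lemma orderedMonomial_twistedShift (p : Fin 3 → ℕ) :
    orderedMonomial (fun i ↦ twistedShift ρ (Pi.single i 1)) p = twistedShift ρ p := by
  have h_exp : reorderExponent (Pi.single 0 (p 0)) (Pi.single 1 (p 1)) = 0 ∧
      reorderExponent (Pi.single 0 (p 0) + Pi.single 1 (p 1)) (Pi.single 2 (p 2)) = 0 := by
    simp [reorderExponent]
  have h_sum : Pi.single 0 (p 0) + Pi.single 1 (p 1) + Pi.single 2 (p 2) = p := by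
    simpa [Fin.sum_univ_three] using Finset.univ_sum_single p
  rw [orderedMonomial, twistedShift_single_pow, twistedShift_single_pow, twistedShift_single_pow,
    twistedShift_mul, h_exp.1, zpow_zero, one_smul, twistedShift_mul, h_exp.2, zpow_zero, one_smul,
    h_sum]

lemma linearIndependent_orderedMonomial_of_twistedShift
    (φ : A →ₐ[R] Module.End R ((Fin 3 → ℕ) →₀ R))
    (hφ : ∀ i, φ (s i) = twistedShift ρ (Pi.single i 1)) :
    LinearIndependent R (orderedMonomial s) := by
  have h_map (p : Fin 3 → ℕ) : φ (orderedMonomial s p) = twistedShift ρ p := by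
    rw [← orderedMonomial_twistedShift]
    simp [orderedMonomial, hφ]
  refine .of_comp (LinearMap.applyₗ (Finsupp.single 0 1) ∘ₗ φ.toLinearMap) ?_
  convert (Finsupp.basisSingleOne (R := R) (ι := Fin 3 → ℕ)).linearIndependent using 1
  ext1 p
  simp [h_map, twistedShift_single, reorderExponent]

/-- The exponent `n • d + (r, r, r)` of the ordered monomial that is a unit multiple of
`u ^ d 0 * v ^ d 1 * w ^ d 2 * g ^ r`. -/
def centralExponent (n : ℕ) (t : (Fin 3 → ℕ) × Fin n) : Fin 3 → ℕ :=
  n • t.1 + (t.2 : ℕ) • 1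

lemma centralExponent_div (t : (Fin 3 → ℕ) × Fin n) (i : Fin 3) :
    centralExponent n t i / n = t.1 i := by
  simp [centralExponent, Nat.mul_add_div t.2.pos, Nat.div_eq_of_lt]

lemma centralExponent_mod (t : (Fin 3 → ℕ) × Fin n) (i : Fin 3) :
    centralExponent n t i % n = t.2 := by
  simp [centralExponent, Nat.mod_eq_of_lt]

lemma centralExponent_injective : Function.Injective (centralExponent n) := by
  intro t t' h
  refine Prod.ext (funext fun i ↦ ?_) (Fin.ext ?_)
  · rw [← centralExponent_div, h, centralExponent_div]
  · rw [← centralExponent_mod t 0, h, centralExponent_mod]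

lemma range_centralExponent (hn : 0 < n) :
    Set.range (centralExponent n) = {p | ∀ i, p i ≡ p 2 [MOD n]} := by
  ext p
  constructor
  · rintro ⟨t, rfl⟩ i
    simp only [Nat.ModEq, centralExponent_mod]
  · intro hp
    refine ⟨(fun i ↦ p i / n, ⟨p 2 % n, Nat.mod_lt _ hn⟩), funext fun i ↦ ?_⟩
    have h_mod : p i % n = p 2 % n := hp i
    simp [centralExponent, ← h_mod, Nat.div_add_mod]

lemma forall_zpow_reorderExponent_eq_iff {G : Type*} [CommGroup G] {ζ : G}
    (hζ : IsPrimitiveRoot ζ n) (p : Fin 3 → ℕ) :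
    (∀ q, ζ ^ reorderExponent p q = ζ ^ reorderExponent q p) ↔ ∀ i, p i ≡ p 2 [MOD n] := by
  have h_iff (q : Fin 3 → ℕ) : ζ ^ reorderExponent p q = ζ ^ reorderExponent q p ↔
      (n : ℤ) ∣ reorderExponent p q - reorderExponent q p := by
    rw [← hζ.zpow_eq_one_iff_dvd, zpow_sub, mul_inv_eq_one]
  simp only [h_iff, Nat.modEq_iff_dvd]
  constructor
  · intro hp
    have h_zero : (n : ℤ) ∣ p 2 - p 0 := by
      simpa [reorderExponent, neg_add_eq_sub, dvd_sub_comm] using hp (Pi.single 1 1)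
    have h_one : (n : ℤ) ∣ p 2 - p 1 := by
      simpa [reorderExponent] using hp (Pi.single 0 1)
    intro i
    fin_cases i
    exacts [h_zero, h_one, by simp]
  · intro hp q
    have h_exp : reorderExponent p q - reorderExponent q p =
        (q 0 - q 2) * (p 2 - p 1) + (q 2 - q 1) * (p 2 - p 0) := by
      simp only [reorderExponent]
      ring
    exact h_exp ▸ dvd_add ((hp 1).mul_left _) ((hp 0).mul_left _)

theorem IsQuantumTriple.center_eq_span [IsDomain R] (hs : IsQuantumTriple ρ s)
    (hρ : IsPrimitiveRoot ρ n) (h_gen : Algebra.adjoin R (Set.range s) = ⊤)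
    (h_li : LinearIndependent R (orderedMonomial s)) :
    Subalgebra.toSubmodule (Subalgebra.center R A) =
      Submodule.span R (orderedMonomial s '' {p | ∀ i, p i ≡ p 2 [MOD n]}) := by
  let b := Module.Basis.mk h_li (hs.top_le_span_orderedMonomial h_gen)
  have hb : ⇑b = orderedMonomial s := Module.Basis.coe_mk _ _
  have hb_mul (p q : Fin 3 → ℕ) : b p * b q = ((ρ ^ reorderExponent p q : Rˣ) : R) • b (p + q) := by
    simpa only [hb, Units.smul_def] using hs.orderedMonomial_mul p q
  rw [center_eq_span_of_twisted_basis hb_mul, hb]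
  simp only [Units.val_inj, forall_zpow_reorderExponent_eq_iff hρ]

/-- The generators `u, v, w, g` of the center: `xⁿ, yⁿ, zⁿ, xyz`, with `xⁿ` rescaled so that
`uvw = gⁿ` holds exactly. -/
def centralGenerator (n : ℕ) (ρ : Rˣ) (s : Fin 3 → A) : Fin 4 → A :=
  ![ρ ^ (-(n.choose 2 : ℤ)) • s 0 ^ n, s 1 ^ n, s 2 ^ n, orderedMonomial s 1]

lemma IsQuantumTriple.centralGenerator_relation (hs : IsQuantumTriple ρ s) (n : ℕ) :
    centralGenerator n ρ s 0 * centralGenerator n ρ s 1 * centralGenerator n ρ s 2 =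
      centralGenerator n ρ s 3 ^ n := by
  simp only [centralGenerator, Matrix.cons_val]
  rw [hs.orderedMonomial_one_pow]
  simp [orderedMonomial, smul_mul_assoc]

lemma IsQuantumTriple.exists_normalMonomial_centralGenerator_eq (hs : IsQuantumTriple ρ s)
    (t : (Fin 3 → ℕ) × Fin n) :
    ∃ c : Rˣ, normalMonomial n (centralGenerator n ρ s) t =
      c • orderedMonomial s (centralExponent n t) := by
  obtain ⟨d, r⟩ := t
  have h_split : normalMonomial n (centralGenerator n ρ s) (d, r) =
      (ρ ^ (-(n.choose 2 : ℤ))) ^ d 0 •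
        (orderedMonomial s (n • d) * orderedMonomial s 1 ^ (r : ℕ)) := by
    simp [normalMonomial, centralGenerator, orderedMonomial, smul_pow, pow_mul, smul_mul_assoc]
  rw [h_split, hs.orderedMonomial_one_pow, mul_smul_comm, hs.orderedMonomial_mul, smul_smul,
    smul_smul, centralExponent]
  exact ⟨_, rfl⟩

lemma IsQuantumTriple.centralGenerator_mem_center [IsDomain R] (hs : IsQuantumTriple ρ s)
    (hρ : IsPrimitiveRoot ρ n) (h_gen : Algebra.adjoin R (Set.range s) = ⊤)
    (h_li : LinearIndependent R (orderedMonomial s)) (i : Fin 4) :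
    centralGenerator n ρ s i ∈ Subalgebra.center R A := by
  have h_mem {p : Fin 3 → ℕ} (hp : ∀ i, p i ≡ p 2 [MOD n]) :
      orderedMonomial s p ∈ Subalgebra.center R A := by
    rw [← Subalgebra.mem_toSubmodule, hs.center_eq_span hρ h_gen h_li]
    exact Submodule.subset_span ⟨p, hp, rfl⟩
  have h_pow (j : Fin 3) : s j ^ n ∈ Subalgebra.center R A := by
    rw [← orderedMonomial_single]
    refine h_mem fun i ↦ ?_
    fin_cases i <;> fin_cases j <;> simp [Nat.ModEq]
  fin_cases i
  exacts [Subalgebra.smul_mem _ (h_pow 0) _, h_pow 1, h_pow 2, h_mem fun _ ↦ rfl]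

end QuantumTriple

theorem center_iso_general {R A : Type*} [CommRing R] [IsDomain R] [Ring A] [Algebra R A] {n : ℕ}
    (hn : 0 < n) {ρ : Rˣ} (hρ : IsPrimitiveRoot ρ n) {s : Fin 3 → A}
    (hs : IsQuantumTriple ρ s) (h_gen : Algebra.adjoin R (Set.range s) = ⊤)
    (h_li : LinearIndependent R (orderedMonomial s)) :
    Nonempty
      ((MvPolynomial (Fin 4) R ⧸
          Ideal.span {(MvPolynomial.X 0 : MvPolynomial (Fin 4) R) * MvPolynomial.X 1 *
            MvPolynomial.X 2 - MvPolynomial.X 3 ^ n}) ≃ₐ[R]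
        Subalgebra.center R A) := by
  let f (i : Fin 4) : Subalgebra.center R A :=
    ⟨centralGenerator n ρ s i, hs.centralGenerator_mem_center hρ h_gen h_li i⟩
  choose c hc using hs.exists_normalMonomial_centralGenerator_eq (n := n)
  have h_val : (Subalgebra.center R A).val.toLinearMap ∘ normalMonomial n f =
      c • orderedMonomial s ∘ centralExponent n :=
    funext fun t ↦ (map_normalMonomial (Subalgebra.center R A).val f t).trans (hc t)
  have hf : f 0 * f 1 * f 2 = f 3 ^ n := Subtype.ext (hs.centralGenerator_relation n)
  have h_span : Subalgebra.toSubmodule (Subalgebra.center R A) ≤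
      Submodule.span R (Set.range (c • orderedMonomial s ∘ centralExponent n)) := by
    rw [hs.center_eq_span hρ h_gen h_li, ← range_centralExponent hn, ← Set.range_comp,
      Submodule.span_le]
    rintro _ ⟨t, rfl⟩
    exact (Submodule.smul_mem_iff' _ (c t)).1 (Submodule.subset_span ⟨t, rfl⟩)
  refine nonempty_algEquiv_of_normalMonomial_basis hn hf
    (.of_comp (Subalgebra.val _).toLinearMap ?_) ?_
  · rw [h_val]
    exact (h_li.comp _ centralExponent_injective).units_smul c
  · rw [← Submodule.map_le_map_iff_of_injective (f := (Subalgebra.val _).toLinearMap)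
      Subtype.val_injective, Submodule.map_span, ← Set.range_comp, h_val]
    rintro _ ⟨a, -, rfl⟩
    exact h_span a.2

namespace QuantumAlg

/-- The triple `(x, y, z)` of generators of `ℂ_ρ[x,y,z]`. -/
noncomputable def gen (ρ : ℂ) : Fin 3 → QuantumAlg ρ := ![qX ρ, qY ρ, qZ ρ]

lemma mkAlgHom_freeGen (ρ : ℂ) (i : Fin 3) :
    RingQuot.mkAlgHom ℂ (QuantumRel ρ) (freeGen i) = gen ρ i := by
  fin_cases i <;> rfl

lemma isQuantumTriple_gen (ρ : ℂˣ) : IsQuantumTriple ρ (gen ρ) := by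
  have h_rel {a b} (h : QuantumRel ρ a b) := RingQuot.mkAlgHom_rel ℂ h
  intro i
  fin_cases i
  exacts [by simpa [mkAlgHom_freeGen, Units.smul_def] using h_rel .xy,
    by simpa [mkAlgHom_freeGen, Units.smul_def] using h_rel .yz,
    by simpa [mkAlgHom_freeGen, Units.smul_def] using h_rel .zx]

lemma adjoin_range_gen (ρ : ℂ) : Algebra.adjoin ℂ (Set.range (gen ρ)) = ⊤ := by
  have h_gen : gen ρ = RingQuot.mkAlgHom ℂ (QuantumRel ρ) ∘ FreeAlgebra.ι ℂ :=
    funext fun i ↦ (mkAlgHom_freeGen ρ i).symm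
  rw [h_gen, Set.range_comp, ← AlgHom.map_adjoin, FreeAlgebra.adjoin_range_ι, Algebra.map_top,
    AlgHom.range_eq_top]
  exact RingQuot.mkAlgHom_surjective ℂ _

/-- The representation of `ℂ_ρ[x,y,z]` on the free module on ordered monomials by left
multiplication, used to separate the ordered monomials. -/
noncomputable def regularRep (ρ : ℂˣ) :
    QuantumAlg ρ →ₐ[ℂ] Module.End ℂ ((Fin 3 → ℕ) →₀ ℂ) :=
  RingQuot.liftAlgHom ℂ ⟨FreeAlgebra.lift ℂ fun i ↦ twistedShift ρ (Pi.single i 1), by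
    have h_shift := isQuantumTriple_twistedShift ρ
    rintro _ _ (_ | _ | _)
    exacts [by simpa [freeGen, Units.smul_def] using h_shift 0,
      by simpa [freeGen, Units.smul_def] using h_shift 1,
      by simpa [freeGen, Units.smul_def] using h_shift 2]⟩

lemma regularRep_gen (ρ : ℂˣ) (i : Fin 3) :
    regularRep ρ (gen ρ i) = twistedShift ρ (Pi.single i 1) := by
  rw [← mkAlgHom_freeGen, regularRep, RingQuot.liftAlgHom_mkAlgHom_apply, freeGen,
    FreeAlgebra.lift_ι_apply]

end QuantumAlg

/-- For `n > 1` and `ρ` a primitive `n`-th root of unity, the center of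
`ℂ_ρ[x,y,z]` is isomorphic as a `ℂ`-algebra to `ℂ[u,v,w,g]/(uvw - gⁿ)`. -/
theorem center_iso (n : ℕ) (hn : 1 < n) (ρ : ℂ) (hρ : IsPrimitiveRoot ρ n) :
    Nonempty
      ((MvPolynomial (Fin 4) ℂ ⧸
          Ideal.span {(MvPolynomial.X 0 : MvPolynomial (Fin 4) ℂ) * MvPolynomial.X 1 *
            MvPolynomial.X 2 - MvPolynomial.X 3 ^ n}) ≃ₐ[ℂ]
        Subalgebra.center ℂ (QuantumAlg ρ)) := by
  obtain ⟨ρ, rfl⟩ := hρ.isUnit (by omega)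
  exact center_iso_general (zero_lt_one.trans hn) (IsPrimitiveRoot.coe_units_iff.1 hρ)
    (QuantumAlg.isQuantumTriple_gen ρ) (QuantumAlg.adjoin_range_gen ρ)
    (linearIndependent_orderedMonomial_of_twistedShift (QuantumAlg.regularRep ρ)
      (QuantumAlg.regularRep_gen ρ))
end

section
/- For every integer n ≥ 1, the integral domain ℂ[u,v,w,g]/(uvw − g^n) is integrally closed in its field of fractions. -/
/-!
Send `uᵢ` to `xᵢⁿ` and `g` to `∏ xᵢ`. The `k`-linear map from `k[x₁, …, xₘ]` back to the quotient
that carries `x ^ (n a + r (1, …, 1))` to `u ^ a * g ^ r`, and kills every monomial whose exponents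
are not all congruent modulo `n`, is linear over the quotient: it is a characteristic-free
substitute for averaging over the group. A ring with such a retraction from an integrally closed
domain `P` is integrally closed: if `p / q` is integral, then `p = q * h` for some `h` in `P`, and
applying the retraction to this equation shows that `q` divides `p` already in the subring.
-/

open MvPolynomial

theorem isIntegrallyClosed_of_retraction {R P : Type*} [CommRing R] [CommRing P] [IsDomain P]
    [IsIntegrallyClosed P] [Algebra R P] (ρ : P →ₗ[R] R) (hρ : ρ 1 = 1) :
    IsIntegrallyClosed R := by
  have retract (r : R) : ρ (algebraMap R P r) = r := by
    rw [Algebra.algebraMap_eq_smul_one, map_smul, hρ, smul_eq_mul, mul_one]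
  have injective : Function.Injective (algebraMap R P) := Function.LeftInverse.injective retract
  have : IsDomain R := injective.isDomain _
  have : FaithfulSMul R P := (faithfulSMul_iff_algebraMap_injective R P).2 injective
  let ψ : FractionRing R →ₐ[R] FractionRing P :=
    IsFractionRing.liftAlgHom (g := Algebra.ofId R (FractionRing P))
      (FaithfulSMul.algebraMap_injective R (FractionRing P))
  refine (isIntegrallyClosed_iff (FractionRing R)).2 fun {x} hx ↦ ?_
  obtain ⟨h, hh⟩ : ∃ h, algebraMap P (FractionRing P) h = ψ x :=
    IsIntegrallyClosed.algebraMap_eq_of_integral (hx.map ψ).tower_top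
  obtain ⟨p, q, hq, rfl⟩ := IsFractionRing.div_surjective (A := R) x
  have hq₀ : algebraMap R (FractionRing R) q ≠ 0 :=
    IsFractionRing.to_map_ne_zero_of_mem_nonZeroDivisors hq
  have smul_eq : q • h = algebraMap R P p := by
    apply IsFractionRing.injective P (FractionRing P)
    rw [Algebra.smul_def, map_mul, hh, ← IsScalarTower.algebraMap_apply,
      ← IsScalarTower.algebraMap_apply, ← ψ.commutes, ← ψ.commutes, ← map_mul,
      mul_div_cancel₀ _ hq₀]
  have mul_eq : q * ρ h = p := by
    rw [← smul_eq_mul, ← map_smul, smul_eq, retract]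
  exact ⟨ρ h, by rw [eq_div_iff hq₀, ← map_mul, mul_comm, mul_eq]⟩

theorem mvPolynomial_isIntegrallyClosed (σ k : Type*) [Finite σ] [CommRing k] [IsDomain k]
    [IsIntegrallyClosed k] : IsIntegrallyClosed (MvPolynomial σ k) := by
  induction σ using Finite.induction_empty_option with
  | of_equiv e ih => exact .of_equiv (renameEquiv k e).toRingEquiv
  | h_empty => exact .of_equiv (isEmptyAlgEquiv k PEmpty).symm.toRingEquiv
  | h_option ih => exact .of_equiv (optionEquivLeft k _).symm.toRingEquiv

theorem exists_eq_mul_add_of_modEq {ι : Type*} {n : ℕ} {i₀ : ι} {s : ι → ℕ}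
    (hs : ∀ i, s i ≡ s i₀ [MOD n]) : ∃ (a : ι → ℕ) (r : ℕ), s = fun i ↦ n * a i + r :=
  ⟨fun i ↦ s i / n, s i₀ % n, funext fun i ↦ by rw [← hs i, Nat.div_add_mod]⟩

section Retraction

variable {ι S : Type*} [Fintype ι] [CommSemiring S] {n : ℕ} {i₀ : ι} {u : ι → S} {g : S}

/-- The image of the monomial `x ^ s` under the retraction: `u ^ a * g ^ r` if
`s = n a + r (1, …, 1)`, where `r` is the common residue modulo `n` of the exponents, and zero if
they are not all congruent. The base point `i₀` serves to read off `r`. -/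
def monomialRetraction (n : ℕ) (i₀ : ι) (u : ι → S) (g : S) (s : ι → ℕ) : S :=
  if ∀ i, s i ≡ s i₀ [MOD n] then (∏ i, u i ^ (s i / n)) * g ^ (s i₀ % n) else 0

theorem monomialRetraction_zero : monomialRetraction n i₀ u g 0 = 1 := by
  simp [monomialRetraction, Nat.ModEq.refl]

theorem monomialRetraction_eq_zero {s : ι → ℕ} (hs : ¬ ∀ i, s i ≡ s i₀ [MOD n]) :
    monomialRetraction n i₀ u g s = 0 :=
  if_neg hs

theorem monomialRetraction_mul_add (hn : n ≠ 0) (hug : ∏ i, u i = g ^ n) (a : ι → ℕ) (r : ℕ) :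
    monomialRetraction n i₀ u g (fun i ↦ n * a i + r) = (∏ i, u i ^ a i) * g ^ r := by
  have hcongr (i : ι) : n * a i + r ≡ n * a i₀ + r [MOD n] := by simp [Nat.ModEq]
  calc monomialRetraction n i₀ u g (fun i ↦ n * a i + r)
      = (∏ i, u i ^ (a i + r / n)) * g ^ (r % n) := by
        simp only [monomialRetraction, if_pos hcongr, Nat.mul_add_div hn.pos, Nat.mul_add_mod]
    _ = (∏ i, u i ^ a i) * ((∏ i, u i) ^ (r / n) * g ^ (r % n)) := by
        simp only [pow_add, Finset.prod_mul_distrib, Finset.prod_pow, mul_assoc]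
    _ = (∏ i, u i ^ a i) * g ^ r := by
        rw [hug, ← pow_mul, ← pow_add, Nat.div_add_mod]

theorem monomialRetraction_single_add [DecidableEq ι] (hn : n ≠ 0) (hug : ∏ i, u i = g ^ n)
    (i : ι) (s : ι → ℕ) :
    monomialRetraction n i₀ u g (Pi.single i n + s) = u i * monomialRetraction n i₀ u g s := by
  have single_modEq (j : ι) : (Pi.single i n + s : ι → ℕ) j ≡ s j [MOD n] := by
    obtain rfl | hj := eq_or_ne j i <;> simp [Nat.ModEq, *]
  by_cases hs : ∀ j, s j ≡ s i₀ [MOD n]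
  · obtain ⟨a, r, rfl⟩ := exists_eq_mul_add_of_modEq hs
    have shift : Pi.single i n + (fun j ↦ n * a j + r) =
        fun j ↦ n * (Pi.single i 1 + a : ι → ℕ) j + r := by
      ext j
      obtain rfl | hj := eq_or_ne j i
      · simp only [Pi.add_apply, Pi.single_eq_same]; ring
      · simp [hj]
    have prod_single : ∏ j, u j ^ (Pi.single i 1 : ι → ℕ) j = u i := by
      simp [Pi.single_apply]
    rw [shift, monomialRetraction_mul_add hn hug, monomialRetraction_mul_add hn hug]
    simp only [Pi.add_apply, pow_add, Finset.prod_mul_distrib, prod_single, mul_assoc]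
  · rw [monomialRetraction_eq_zero hs, mul_zero, monomialRetraction_eq_zero]
    exact fun h ↦ hs fun j ↦ (single_modEq j).symm.trans ((h j).trans (single_modEq i₀))

theorem monomialRetraction_one_add (hn : n ≠ 0) (hug : ∏ i, u i = g ^ n) (s : ι → ℕ) :
    monomialRetraction n i₀ u g (1 + s) = g * monomialRetraction n i₀ u g s := by
  by_cases hs : ∀ i, s i ≡ s i₀ [MOD n]
  · obtain ⟨a, r, rfl⟩ := exists_eq_mul_add_of_modEq hs
    have shift : 1 + (fun i ↦ n * a i + r) = fun i ↦ n * a i + (1 + r) :=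
      funext fun i ↦ add_left_comm 1 (n * a i) r
    rw [shift, monomialRetraction_mul_add hn hug, monomialRetraction_mul_add hn hug, pow_add,
      pow_one, mul_left_comm]
  · rw [monomialRetraction_eq_zero hs, mul_zero, monomialRetraction_eq_zero]
    exact fun h ↦ hs fun i ↦ (h i).add_left_cancel' 1

/-- The `k`-linear map `k[x] → S` extending `monomialRetraction`. It replaces the Reynolds operator
onto the subring generated by the `xᵢⁿ` and `∏ xᵢ`. -/
noncomputable def polynomialRetraction (k : Type*) [CommSemiring k] [Algebra k S] (n : ℕ) (i₀ : ι)
    (u : ι → S) (g : S) : MvPolynomial ι k →ₗ[k] S :=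
  (basisMonomials ι k).constr k fun s ↦ monomialRetraction n i₀ u g s

variable {k : Type*} [CommSemiring k] [Algebra k S]

theorem polynomialRetraction_monomial (s : ι →₀ ℕ) :
    polynomialRetraction k n i₀ u g (monomial s 1) = monomialRetraction n i₀ u g s := by
  simpa only [polynomialRetraction, coe_basisMonomials] using
    (basisMonomials ι k).constr_basis k (fun s ↦ monomialRetraction n i₀ u g s) s

theorem polynomialRetraction_monomial_mul {e : ι →₀ ℕ} {t : S}
    (h : ∀ s : ι → ℕ, monomialRetraction n i₀ u g (e + s) = t * monomialRetraction n i₀ u g s)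
    (p : MvPolynomial ι k) :
    polynomialRetraction k n i₀ u g (monomial e 1 * p) = t * polynomialRetraction k n i₀ u g p := by
  have : polynomialRetraction k n i₀ u g ∘ₗ LinearMap.mulLeft k (monomial e 1) =
      LinearMap.mulLeft k t ∘ₗ polynomialRetraction k n i₀ u g :=
    (basisMonomials ι k).ext fun s ↦ by
      simp [monomial_mul, polynomialRetraction_monomial, h]
  exact LinearMap.congr_fun this p

theorem polynomialRetraction_X_pow_mul (hn : n ≠ 0) (hug : ∏ i, u i = g ^ n) (i : ι)
    (p : MvPolynomial ι k) :
    polynomialRetraction k n i₀ u g (X i ^ n * p) = u i * polynomialRetraction k n i₀ u g p := by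
  classical
  rw [X_pow_eq_monomial]
  refine polynomialRetraction_monomial_mul (fun s ↦ ?_) p
  rw [Finsupp.single_eq_pi_single, monomialRetraction_single_add hn hug]

theorem polynomialRetraction_prod_X_mul (hn : n ≠ 0) (hug : ∏ i, u i = g ^ n)
    (p : MvPolynomial ι k) :
    polynomialRetraction k n i₀ u g ((∏ i, X i) * p) = g * polynomialRetraction k n i₀ u g p := by
  classical
  have coe_sum_single : ⇑(∑ i : ι, Finsupp.single i 1) = (1 : ι → ℕ) := by
    ext j
    simp [Finsupp.single_apply]
  simp only [X, ← monomial_sum_one]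
  refine polynomialRetraction_monomial_mul (fun s ↦ ?_) p
  rw [coe_sum_single, monomialRetraction_one_add hn hug]

theorem polynomialRetraction_map_mul (hn : n ≠ 0) (hug : ∏ i, u i = g ^ n)
    (hgen : Algebra.adjoin k (insert g (Set.range u)) = ⊤) {φ : S →ₐ[k] MvPolynomial ι k}
    (hu : ∀ i, φ (u i) = X i ^ n) (hg : φ g = ∏ i, X i) (a : S) (p : MvPolynomial ι k) :
    polynomialRetraction k n i₀ u g (φ a * p) = a * polynomialRetraction k n i₀ u g p := by
  have ha : a ∈ Algebra.adjoin k (insert g (Set.range u)) := hgen ▸ Algebra.mem_top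
  induction ha using Algebra.adjoin_induction generalizing p with
  | mem a ha =>
    obtain rfl | ⟨i, rfl⟩ := ha
    · rw [hg, polynomialRetraction_prod_X_mul hn hug]
    · rw [hu, polynomialRetraction_X_pow_mul hn hug]
  | algebraMap c => rw [φ.commutes, ← Algebra.smul_def, map_smul, Algebra.smul_def]
  | add a b _ _ iha ihb => rw [map_add, add_mul, map_add, iha, ihb, add_mul]
  | mul a b _ _ iha ihb => rw [map_mul φ, mul_assoc, iha, ihb, mul_assoc]

end Retraction

theorem isIntegrallyClosed_of_adjoin_eq_top {ι k S : Type*} [Fintype ι] [Nonempty ι] [CommRing k]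
    [IsDomain k] [IsIntegrallyClosed k] [CommRing S] [Algebra k S] {n : ℕ} {u : ι → S} {g : S}
    (hn : n ≠ 0) (hug : ∏ i, u i = g ^ n)
    (hgen : Algebra.adjoin k (insert g (Set.range u)) = ⊤) {φ : S →ₐ[k] MvPolynomial ι k}
    (hu : ∀ i, φ (u i) = X i ^ n) (hg : φ g = ∏ i, X i) : IsIntegrallyClosed S := by
  obtain ⟨i₀⟩ := ‹Nonempty ι›
  have := mvPolynomial_isIntegrallyClosed ι k
  let : Algebra S (MvPolynomial ι k) := φ.toAlgebra
  let ρ : MvPolynomial ι k →ₗ[S] S :=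
    { polynomialRetraction k n i₀ u g with
      map_smul' := polynomialRetraction_map_mul hn hug hgen hu hg }
  refine isIntegrallyClosed_of_retraction ρ ?_
  exact (polynomialRetraction_monomial 0).trans monomialRetraction_zero

theorem adjoin_range_mk_X {σ k : Type*} [CommRing k] (I : Ideal (MvPolynomial σ k)) :
    Algebra.adjoin k (Set.range fun i ↦ Ideal.Quotient.mk I (X i)) = ⊤ := by
  have : (Set.range fun i ↦ Ideal.Quotient.mk I (X i)) =
      Ideal.Quotient.mkₐ k I '' Set.range X :=
    Set.range_comp _ _
  rw [this, ← AlgHom.map_adjoin, adjoin_range_X, Algebra.map_top, AlgHom.range_eq_top]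
  exact Ideal.Quotient.mkₐ_surjective k I

theorem quotient_integrally_closed_general (k : Type*) [CommRing k] [IsDomain k]
    [IsIntegrallyClosed k] (m n : ℕ) [NeZero m] (hn : n ≠ 0) :
    IsIntegrallyClosed (MvPolynomial (Fin (m + 1)) k ⧸
      Ideal.span {∏ i : Fin m, (X i.castSucc : MvPolynomial (Fin (m + 1)) k) -
        X (Fin.last m) ^ n}) := by
  set f : MvPolynomial (Fin (m + 1)) k := ∏ i : Fin m, X i.castSucc - X (Fin.last m) ^ n with hf
  let t (j : Fin (m + 1)) : MvPolynomial (Fin (m + 1)) k ⧸ Ideal.span {f} :=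
    Ideal.Quotient.mk _ (X j)
  let Φ : MvPolynomial (Fin (m + 1)) k →ₐ[k] MvPolynomial (Fin m) k :=
    aeval (Fin.snoc (fun i ↦ X i ^ n) (∏ i, X i))
  have Φ_castSucc (i : Fin m) : Φ (X i.castSucc) = X i ^ n := by simp [Φ]
  have Φ_last : Φ (X (Fin.last m)) = ∏ i, X i := by simp [Φ]
  have Φ_relation : Φ f = 0 := by
    simp only [hf, map_sub, map_prod, map_pow, Φ_castSucc, Φ_last, Finset.prod_pow, sub_self]
  have relation : ∏ i : Fin m, t i.castSucc = t (Fin.last m) ^ n := by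
    simp only [t, ← map_prod, ← map_pow]
    exact Ideal.Quotient.eq.2 (Ideal.mem_span_singleton_self f)
  have generate :
      Algebra.adjoin k (insert (t (Fin.last m)) (Set.range fun i : Fin m ↦ t i.castSucc)) = ⊤ := by
    rw [← adjoin_range_mk_X (Ideal.span {f})]
    congr 1
    ext x
    simp [Fin.exists_fin_succ', t, eq_comm, or_comm]
  have vanish : ∀ a ∈ Ideal.span {f}, Φ a = 0 :=
    show Ideal.span {f} ≤ RingHom.ker Φ from (Ideal.span_singleton_le_iff_mem _).2 Φ_relation
  exact isIntegrallyClosed_of_adjoin_eq_top (φ := Ideal.Quotient.liftₐ _ Φ vanish)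
    hn relation generate Φ_castSucc Φ_last

/-- for every `n ≥ 1`, the integral domain `ℂ[u,v,w,g]/(uvw - gⁿ)` is
integrally closed in its field of fractions. -/
theorem quotient_integrally_closed (n : ℕ) (hn : 1 ≤ n) :
    IsIntegrallyClosed (MvPolynomial (Fin 4) ℂ ⧸
      Ideal.span {(MvPolynomial.X 0 : MvPolynomial (Fin 4) ℂ) * MvPolynomial.X 1 *
        MvPolynomial.X 2 - MvPolynomial.X 3 ^ n}) := by
  have prod_X : ∏ i : Fin 3, X i.castSucc = (X 0 * X 1 * X 2 : MvPolynomial (Fin 4) ℂ) :=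
    Fin.prod_univ_three _
  exact prod_X ▸ quotient_integrally_closed_general ℂ 3 n (Nat.one_le_iff_ne_zero.1 hn)
end
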